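/- Let F : X → L be a single-label classifier into a finite label type L, M a finite nonempty set of masks, x ∈ X, y ∈ L, and m* ∈ M a mask with the row-robustness property F((x ∘ m*) ∘ m) = y for every m ∈ M. Then for every patch region r covered by m* and every adversarial content x'' ∈ X, the double-masking inference procedure is correct on the attacked image: DoubleMaskingInfer(F, M, patch(x,r,x'')) = y. (Lemma 2: validity of the per-mask vulnerability status array returned by the double-masking certification procedure.) -/

import Mathlib

/-- Images with width `w`, height `h`, and `γ` channels. -/
abbrev Img (w h γ : ℕ) := Fin w → Fin h → Fin γ → ℝ

/-- The patched image: pixels inside the patch region (`r i j = false`) are replaced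
by adversarial content `x''`. -/
def patch {w h γ : ℕ} (x : Img w h γ) (r : Fin w → Fin h → Bool) (x'' : Img w h γ) :
    Img w h γ :=
  fun i j k => if r i j then x i j k else x'' i j k

/-- Masking an image: occluded pixels (`m i j = false`) are set to `0`. -/
def maskImg {w h γ : ℕ} (x : Img w h γ) (m : Fin w → Fin h → Bool) : Img w h γ :=
  fun i j k => if m i j then x i j k else 0

noncomputable section
open scoped Classical

/-- Iterate over a list of (disagreer) masks in order; for the first one whose
second-round predictions all agree (consensus), return its first-round prediction. -/
def firstConsensus {w h γ : ℕ} {L : Type*} (F : Img w h γ → L)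
    (M : Finset (Fin w → Fin h → Bool)) (x : Img w h γ) :
    List (Fin w → Fin h → Bool) → Option L
  | [] => none
  | m :: rest =>
      if ∀ m₁ ∈ M, ∀ m₂ ∈ M,
          F (maskImg (maskImg x m) m₁) = F (maskImg (maskImg x m) m₂) then
        some (F (maskImg x m))
      else firstConsensus F M x rest

/-- A label attaining the maximum multiplicity among the first-round masked
predictions (ties broken by a fixed rule). -/
def majLabel {w h γ : ℕ} {L : Type*} [Nonempty L] (F : Img w h γ → L)
    (M : Finset (Fin w → Fin h → Bool)) (x : Img w h γ) : L :=
  if hM : M.Nonempty then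
    Classical.choose ((M.image fun m => F (maskImg x m)).exists_max_image
      (fun l => (M.filter fun m => F (maskImg x m) = l).card) (hM.image _))
  else Classical.arbitrary L

/-- PatchCleanser's double-masking inference procedure: return the first-round majority
label if there are no disagreers; otherwise iterate over the disagreers in a fixed
order, returning the first-round prediction of the first disagreer achieving
second-round consensus; if none does, return the majority label. -/
def DoubleMaskingInfer {w h γ : ℕ} {L : Type*} [Nonempty L] (F : Img w h γ → L)
    (M : Finset (Fin w → Fin h → Bool)) (x : Img w h γ) : L :=
  let ymaj := majLabel F M x
  let D := M.filter fun m => F (maskImg x m) ≠ ymaj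
  match firstConsensus F M x D.toList with
  | some l => l
  | none => ymaj

/-!
Two masks commute, and masking twice with the same mask changes nothing. Hence two masks of `M`
that both reach second-round consensus have the same first-round prediction, as both predictions
equal the one for the image occluded by both masks. So as soon as some `m ∈ M` reaches consensus,
inference returns its prediction: either another consensus mask answers, or none does and `m` is
not a disagreer, so that its prediction is the majority label. A mask covering the patch hides the
attack, so row-robustness on the clean image gives consensus on the attacked one.
-/

section Masking

variable {w h γ : ℕ}

theorem maskImg_maskImg (x : Img w h γ) (m n : Fin w → Fin h → Bool) :
    maskImg (maskImg x m) n = maskImg x (m ⊓ n) := by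
  funext i j k
  cases hm : m i j <;> cases hn : n i j <;> simp [maskImg, hm, hn]

theorem maskImg_maskImg_self (x : Img w h γ) (m : Fin w → Fin h → Bool) :
    maskImg (maskImg x m) m = maskImg x m := by
  rw [maskImg_maskImg, inf_idem]

theorem maskImg_right_comm (x : Img w h γ) (m n : Fin w → Fin h → Bool) :
    maskImg (maskImg x m) n = maskImg (maskImg x n) m := by
  rw [maskImg_maskImg, maskImg_maskImg, inf_comm]

theorem maskImg_patch_of_covers {m r : Fin w → Fin h → Bool}
    (hcover : ∀ i j, m i j = true → r i j = true) (x x'' : Img w h γ) :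
    maskImg (patch x r x'') m = maskImg x m := by
  funext i j k
  by_cases hm : m i j = true
  · simp [maskImg, patch, hm, hcover i j hm]
  · simp [maskImg, hm]

end Masking

section Consensus

variable {w h γ : ℕ} {L : Type*} {F : Img w h γ → L} {M : Finset (Fin w → Fin h → Bool)}
  {x : Img w h γ} {m n : Fin w → Fin h → Bool}

/-- Second-round consensus: the image already occluded by `m` gets the same label under every
further mask of `M`. This is the test by which `firstConsensus` selects a mask, written as pairwise
equality, so that it holds vacuously for empty `M`. -/
def HasConsensus (F : Img w h γ → L) (M : Finset (Fin w → Fin h → Bool)) (x : Img w h γ)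
    (m : Fin w → Fin h → Bool) : Prop :=
  ∀ m₁ ∈ M, ∀ m₂ ∈ M, F (maskImg (maskImg x m) m₁) = F (maskImg (maskImg x m) m₂)

theorem hasConsensus_of_forall_eq {y : L} (hy : ∀ n ∈ M, F (maskImg (maskImg x m) n) = y) :
    HasConsensus F M x m :=
  fun m₁ hm₁ m₂ hm₂ => (hy m₁ hm₁).trans (hy m₂ hm₂).symm

theorem HasConsensus.maskImg_maskImg_eq (hcons : HasConsensus F M x m) (hm : m ∈ M)
    (hn : n ∈ M) : F (maskImg (maskImg x m) n) = F (maskImg x m) := by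
  rw [hcons n hn m hm, maskImg_maskImg_self]

theorem HasConsensus.maskImg_eq_maskImg (hm : HasConsensus F M x m) (hn : HasConsensus F M x n)
    (hmM : m ∈ M) (hnM : n ∈ M) : F (maskImg x m) = F (maskImg x n) :=
  calc
    F (maskImg x m) = F (maskImg (maskImg x m) n) := (hm.maskImg_maskImg_eq hmM hnM).symm
    _ = F (maskImg (maskImg x n) m) := by rw [maskImg_right_comm]
    _ = F (maskImg x n) := hn.maskImg_maskImg_eq hnM hmM

end Consensus

section Inference

variable {w h γ : ℕ} {L : Type*} (F : Img w h γ → L) (M : Finset (Fin w → Fin h → Bool))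
  (x : Img w h γ)

theorem firstConsensus_eq_map_find? (l : List (Fin w → Fin h → Bool)) :
    firstConsensus F M x l =
      (l.find? fun m => decide (HasConsensus F M x m)).map fun m => F (maskImg x m) := by
  induction l with
  | nil => rfl
  | cons m rest ih =>
    by_cases hm : HasConsensus F M x m
    · exact (if_pos hm).trans (by simp [hm])
    · exact (if_neg hm).trans (by simp [hm, ih])

theorem doubleMaskingInfer_eq_consensus_or_majLabel [Nonempty L] :
    (∃ m ∈ M, HasConsensus F M x m ∧ DoubleMaskingInfer F M x = F (maskImg x m)) ∨
      (∀ m ∈ M, HasConsensus F M x m → F (maskImg x m) = majLabel F M x) ∧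
        DoubleMaskingInfer F M x = majLabel F M x := by
  simp only [DoubleMaskingInfer, firstConsensus_eq_map_find?]
  set D := M.filter fun m => F (maskImg x m) ≠ majLabel F M x
  cases hfind : D.toList.find? fun m => decide (HasConsensus F M x m) with
  | none =>
    refine .inr ⟨fun m hmM hm => ?_, rfl⟩
    by_contra hdis
    have hmD : m ∈ D.toList := Finset.mem_toList.2 (Finset.mem_filter.2 ⟨hmM, hdis⟩)
    exact List.find?_eq_none.1 hfind m hmD (decide_eq_true hm)
  | some m =>
    have hmD : m ∈ D := Finset.mem_toList.1 (List.mem_of_find?_eq_some hfind)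
    have hm : HasConsensus F M x m := by simpa using List.find?_some hfind
    exact .inl ⟨m, Finset.mem_of_mem_filter m hmD, hm, rfl⟩

variable {F M x}

theorem HasConsensus.doubleMaskingInfer_eq [Nonempty L] {m : Fin w → Fin h → Bool}
    (hm : HasConsensus F M x m) (hmM : m ∈ M) :
    DoubleMaskingInfer F M x = F (maskImg x m) := by
  obtain ⟨n, hnM, hn, hinfer⟩ | ⟨hmaj, hinfer⟩ := doubleMaskingInfer_eq_consensus_or_majLabel F M x
  · exact hinfer.trans (hn.maskImg_eq_maskImg hm hnM hmM)
  · exact hinfer.trans (hmaj m hmM hm).symm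

end Inference

theorem vulnerability_status_valid_general {w h γ : ℕ} {L : Type*} [Nonempty L]
    (F : Img w h γ → L) (M : Finset (Fin w → Fin h → Bool))
    (mstar : Fin w → Fin h → Bool) (hmstar : mstar ∈ M) (x : Img w h γ) (y : L)
    (hrow : ∀ m ∈ M, F (maskImg (maskImg x mstar) m) = y)
    (r : Fin w → Fin h → Bool) (hcover : ∀ i j, mstar i j = true → r i j = true)
    (x'' : Img w h γ) : DoubleMaskingInfer F M (patch x r x'') = y := by
  have hmask : maskImg (patch x r x'') mstar = maskImg x mstar :=
    maskImg_patch_of_covers hcover x x''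
  have hcons : HasConsensus F M (patch x r x'') mstar :=
    hasConsensus_of_forall_eq (hmask.symm ▸ hrow)
  calc
    DoubleMaskingInfer F M (patch x r x'') = F (maskImg (patch x r x'') mstar) :=
      hcons.doubleMaskingInfer_eq hmstar
    _ = F (maskImg (maskImg x mstar) mstar) := by rw [hmask, maskImg_maskImg_self]
    _ = y := hrow mstar hmstar

/-- Lemma 2 (validity of the per-mask vulnerability status array returned by the
double-masking certification procedure): if mask `m* ∈ M` has the row-robustness
property `F((x ∘ m*) ∘ m) = y` for every `m ∈ M`, then double-masking inference is
correct on any image attacked inside a patch region covered by `m*`. -/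
theorem vulnerability_status_valid {w h γ : ℕ} {L : Type*} [Fintype L] [Nonempty L]
    (F : Img w h γ → L) (M : Finset (Fin w → Fin h → Bool)) (hM : M.Nonempty)
    (mstar : Fin w → Fin h → Bool) (hmstar : mstar ∈ M)
    (x : Img w h γ) (y : L)
    (hrow : ∀ m ∈ M, F (maskImg (maskImg x mstar) m) = y) :
    ∀ r : Fin w → Fin h → Bool, (∀ i j, mstar i j = true → r i j = true) →
      ∀ x'' : Img w h γ, DoubleMaskingInfer F M (patch x r x'') = y :=
  vulnerability_status_valid_general F M mstar hmstar x y hrow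

end
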